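/- arXiv:2101.05686 — 5 statements merged into one kernel-verified Lean document; each statement's English description precedes it below -/
import Mathlib

section
/- Let p_H, p_V ∈ (0,1] with p_H ≠ p_V. Then the 2×2 Hermitian matrix M = (1/2)·[[1 − p_H, 1 − √(p_H p_V)], [1 − √(p_H p_V), 1 − p_V]] is not positive semidefinite. (Hence for the polarization dependent loss operation Λ(ρ) = A ρ Aᴴ with A = diag(√p_H, √p_V), the map Φ_Λ − Λ = Id − Λ is not positive, so Φ_Λ − Λ is not a quantum operation and Λ cannot be extended to the channel Φ_Λ = Id.) -/
open Matrix ComplexOrder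

/-!
Up to the factor `1/2`, the matrix is `1 - a k * star (a l)` with amplitudes `a = (√p_H, √p_V)`.
Testing it on `e_H - e_V`, which is orthogonal to the all-ones vector, leaves only
`-|a_H - a_V|²`, and this is negative as soon as the two amplitudes differ.
-/

section StarRing

variable {n R : Type*} [Ring R] [PartialOrder R] [StarRing R]

theorem apply_add_apply_le_of_posSemidef [AddRightMono R] {M : Matrix n n R}
    (hM : M.PosSemidef) (i j : n) :
    M i j + M j i ≤ M i i + M j j := by
  have quadratic_form_nonneg :=
    (hM.submatrix ![i, j]).dotProduct_mulVec_nonneg ![1, -1]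
  have quadratic_form_eq :
      star ![1, -1] ⬝ᵥ (M.submatrix ![i, j] ![i, j] *ᵥ ![1, -1]) =
        M i i + M j j - (M i j + M j i) := by
    simp only [dotProduct, mulVec, Fin.sum_univ_two, Pi.star_apply, submatrix_apply,
      cons_val_zero, cons_val_one, star_one, star_neg, mul_one, one_mul, mul_neg, neg_mul]
    abel
  rwa [quadratic_form_eq, sub_nonneg] at quadratic_form_nonneg

theorem eq_of_posSemidef_one_sub_mul_star [StarOrderedRing R] [NoZeroDivisors R] {a : n → R}
    (h : (Matrix.of fun k l ↦ 1 - a k * star (a l)).PosSemidef) (i j : n) : a i = a j := by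
  have entries_le := apply_add_apply_le_of_posSemidef h i j
  have mul_star_nonpos : (a i - a j) * star (a i - a j) ≤ 0 := by
    rw [← sub_nonneg] at entries_le ⊢
    convert entries_le using 1
    simp only [of_apply, star_sub]
    noncomm_ring
  have mul_star_eq_zero := mul_star_nonpos.antisymm (mul_star_self_nonneg _)
  rcases mul_eq_zero.mp mul_star_eq_zero with sub_eq | star_sub_eq
  · exact sub_eq_zero.mp sub_eq
  · exact sub_eq_zero.mp (star_eq_zero.mp star_sub_eq)

end StarRing

theorem posSemidef_smul_iff_of_pos {n 𝕜 : Type*} [Field 𝕜] [PartialOrder 𝕜] [StarRing 𝕜]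
    [StarOrderedRing 𝕜] [PosMulReflectLT 𝕜] {M : Matrix n n 𝕜} {c : 𝕜}
    (hc : 0 < c) : (c • M).PosSemidef ↔ M.PosSemidef := by
  refine ⟨fun h ↦ ?_, fun h ↦ h.smul hc.le⟩
  simpa only [inv_smul_smul₀ hc.ne'] using h.smul (inv_nonneg.mpr hc.le)

theorem of_one_sub_sqrt_mul_fin_two {x y : ℝ} (hx : 0 ≤ x) (hy : 0 ≤ y) :
    Matrix.of (fun k l ↦ ((1 - √(![x, y] k * ![x, y] l) : ℝ) : ℂ)) =
      !![((1 - x : ℝ) : ℂ), ((1 - √(x * y) : ℝ) : ℂ);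
        ((1 - √(x * y) : ℝ) : ℂ), ((1 - y : ℝ) : ℂ)] := by
  ext k l
  fin_cases k <;> fin_cases l <;> simp [Real.sqrt_mul_self, hx, hy, mul_comm]

theorem pdl_not_extendable_to_identity_general {n : Type*} {p : n → ℝ} (hp : ∀ k, 0 ≤ p k)
    {i j : n} (hij : p i ≠ p j) {c : ℂ} (hc : 0 < c) :
    ¬ (c • Matrix.of fun k l ↦ ((1 - √(p k * p l) : ℝ) : ℂ)).PosSemidef := by
  rw [posSemidef_smul_iff_of_pos hc]
  intro h
  have amplitudes_eq : (√(p i) : ℂ) = √(p j) := by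
    refine eq_of_posSemidef_one_sub_mul_star (a := fun k ↦ (√(p k) : ℂ)) ?_ i j
    simpa [Real.sqrt_mul (hp _)] using h
  exact hij ((Real.sqrt_inj (hp i) (hp j)).mp (Complex.ofReal_injective amplitudes_eq))

/-- for p_H, p_V ∈ (0,1] with p_H ≠ p_V, the matrix
(1/2)·[[1−p_H, 1−√(p_H p_V)], [1−√(p_H p_V), 1−p_V]] is not positive semidefinite,
so the polarization dependent loss operation cannot be extended to the identity channel. -/
theorem pdl_not_extendable_to_identity (pH pV : ℝ)
    (hH : pH ∈ Set.Ioc (0:ℝ) 1) (hV : pV ∈ Set.Ioc (0:ℝ) 1) (hne : pH ≠ pV) :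
    ¬ ((1/2 : ℂ) • !![((1 - pH : ℝ) : ℂ), ((1 - Real.sqrt (pH * pV) : ℝ) : ℂ);
        ((1 - Real.sqrt (pH * pV) : ℝ) : ℂ), ((1 - pV : ℝ) : ℂ)]).PosSemidef := by
  rw [← of_one_sub_sqrt_mul_fin_two hH.1.le hV.1.le]
  exact pdl_not_extendable_to_identity_general (i := 0) (j := 1)
    (Fin.forall_fin_two.mpr ⟨hH.1.le, hV.1.le⟩) hne one_half_pos
end

section
/- Let Λ₂ be a quantum operation on d×d complex matrices with Kraus operators A_1,…,A_K (so Σ_k A_kᴴ A_k ≤ I), and let Θ be a quantum operation with Kraus operators T_1,…,T_J (so Σ_j T_jᴴ T_j ≤ I). Let Λ₁ = Θ ∘ Λ₂. Then there exist finitely many (d+1)×(d+1) matrices K_1,…,K_M with Σ_m K_mᴴ K_m = I such that for every d×d matrix X, Γ_{Λ₁}(X) = Σ_m K_m Γ_{Λ₂}(X) K_mᴴ. That is, the generalized erasure channel of Λ₁ = Θ ∘ Λ₂ is a quantum channel composed with the generalized erasure channel of Λ₂. -/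
open Matrix ComplexOrder

/-- The generalized erasure channel of a quantum operation Λ on matrices over `n`:
the (d+1)×(d+1) block matrix with top-left block Λ(X), bottom-right scalar entry
tr(X) − tr(Λ(X)), and zero off-diagonal blocks. -/
noncomputable def gec {n : Type*} [Fintype n] [DecidableEq n]
    (Λ : Matrix n n ℂ → Matrix n n ℂ) (X : Matrix n n ℂ) :
    Matrix (n ⊕ Fin 1) (n ⊕ Fin 1) ℂ :=
  Matrix.fromBlocks (Λ X) 0 0 (Matrix.of fun _ _ => X.trace - (Λ X).trace)

/-!
The degrading channel completes `Θ` on the enlarged space. A rank-one decomposition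
`1 - ∑ Tⱼᴴ Tⱼ = ∑ Rᵢᴴ Rᵢ` into rows `Rᵢ` provides Kraus operators that move the trace lost by `Θ`
into the erasure flag, and one more Kraus operator keeps the flag fixed. On the block matrix with
diagonal blocks `Λ₂ X` and `tr X - tr (Λ₂ X)` the resulting flag entry telescopes to
`tr X - tr (Θ (Λ₂ X))`.
-/

theorem sum_fromBlocks {ι l m n o α : Type*} [AddCommMonoid α] (s : Finset ι)
    (A : ι → Matrix n l α) (B : ι → Matrix n m α) (C : ι → Matrix o l α) (D : ι → Matrix o m α) :
    ∑ i ∈ s, fromBlocks (A i) (B i) (C i) (D i) =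
      fromBlocks (∑ i ∈ s, A i) (∑ i ∈ s, B i) (∑ i ∈ s, C i) (∑ i ∈ s, D i) := by
  ext (i | i) (j | j) <;> simp [Matrix.sum_apply]

theorem trace_sum_mul_mul_conjTranspose {ι m n α : Type*} [Fintype ι] [Fintype m] [Fintype n]
    [NonUnitalCommSemiring α] [Star α] (T : ι → Matrix m n α) (Y : Matrix n n α) :
    (∑ i, T i * Y * (T i)ᴴ).trace = ((∑ i, (T i)ᴴ * T i) * Y).trace := by
  simp only [Matrix.sum_mul, trace_sum, trace_mul_cycle (T _) Y]

section ErasureKraus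

variable {ι κ n p α : Type*} [DecidableEq p]

/-- Kraus operators on the direct sum of a system `n` and a flag space `p`: each `T i` acts inside
the system, each `R k` transfers the system to the flag, and a last one, indexed by `Unit`, is the
projection onto the flag. They extend an operation with Kraus operators `T` to the enlarged space,
with `R` collecting the lost trace. -/
def erasureKraus [Zero α] [One α] (T : ι → Matrix n n α) (R : κ → Matrix p n α) :
    ι ⊕ κ ⊕ Unit → Matrix (n ⊕ p) (n ⊕ p) α :=
  Sum.elim (fun i => fromBlocks (T i) 0 0 0)
    (Sum.elim (fun k => fromBlocks 0 0 (R k) 0) fun _ => fromBlocks 0 0 0 1)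

variable [Fintype ι] [Fintype κ] [Fintype n] [Fintype p] [Semiring α] [StarRing α]

theorem sum_conjTranspose_mul_erasureKraus (T : ι → Matrix n n α) (R : κ → Matrix p n α) :
    ∑ x, (erasureKraus T R x)ᴴ * erasureKraus T R x =
      fromBlocks (∑ i, (T i)ᴴ * T i + ∑ k, (R k)ᴴ * R k) 0 0 1 := by
  simp [erasureKraus, Fintype.sum_sum_type, fromBlocks_conjTranspose, fromBlocks_multiply,
    sum_fromBlocks, fromBlocks_add]

theorem sum_erasureKraus_mul_fromBlocks_mul_conjTranspose (T : ι → Matrix n n α)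
    (R : κ → Matrix p n α) (Y : Matrix n n α) (B : Matrix n p α) (C : Matrix p n α)
    (Z : Matrix p p α) :
    ∑ x, erasureKraus T R x * fromBlocks Y B C Z * (erasureKraus T R x)ᴴ =
      fromBlocks (∑ i, T i * Y * (T i)ᴴ) 0 0 (∑ k, R k * Y * (R k)ᴴ + Z) := by
  simp [erasureKraus, Fintype.sum_sum_type, fromBlocks_conjTranspose, fromBlocks_multiply,
    sum_fromBlocks, fromBlocks_add]

end ErasureKraus

theorem exists_rows_sum_conjTranspose_mul_eq {𝕜 n : Type*} [RCLike 𝕜] [Finite n]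
    {P : Matrix n n 𝕜} (hP : P.PosSemidef) :
    ∃ (r : ℕ) (R : Fin r → Matrix (Fin 1) n 𝕜), ∑ i, (R i)ᴴ * R i = P := by
  obtain ⟨r, v, rfl⟩ := posSemidef_iff_eq_sum_vecMulVec.mp hP
  refine ⟨r, fun i => replicateRow (Fin 1) (star (v i)), Finset.sum_congr rfl fun i _ => ?_⟩
  ext a b
  simp [Matrix.mul_apply, vecMulVec_apply]

section Degradation

variable {ι κ n : Type*} [Fintype ι] [Fintype κ] [Fintype n] [DecidableEq n]

theorem gec_comp_eq_sum_erasureKraus {T : ι → Matrix n n ℂ} {R : κ → Matrix (Fin 1) n ℂ}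
    (hTR : ∑ k, (R k)ᴴ * R k = 1 - ∑ i, (T i)ᴴ * T i)
    (Λ : Matrix n n ℂ → Matrix n n ℂ) (X : Matrix n n ℂ) :
    gec (fun Y => ∑ i, T i * Λ Y * (T i)ᴴ) X =
      ∑ x, erasureKraus T R x * gec Λ X * (erasureKraus T R x)ᴴ := by
  have flag_gain : (∑ k, R k * Λ X * (R k)ᴴ).trace =
      (Λ X).trace - (∑ i, T i * Λ X * (T i)ᴴ).trace := by
    rw [trace_sum_mul_mul_conjTranspose, hTR, Matrix.sub_mul, Matrix.one_mul,
      trace_sub, trace_sum_mul_mul_conjTranspose]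
  simp only [gec, sum_erasureKraus_mul_fromBlocks_mul_conjTranspose]
  congr 1
  ext a b
  rw [Subsingleton.elim a 0, Subsingleton.elim b 0, Matrix.add_apply, ← trace_fin_one (∑ k, _),
    flag_gain]
  simp only [of_apply]
  ring

theorem gec_comp_degradation_general (T : ι → Matrix n n ℂ)
    (hT : (1 - ∑ i, (T i)ᴴ * T i).PosSemidef) :
    ∃ (M : ℕ) (Km : Fin M → Matrix (n ⊕ Fin 1) (n ⊕ Fin 1) ℂ),
      ∑ m, (Km m)ᴴ * Km m = 1 ∧
      ∀ (Λ : Matrix n n ℂ → Matrix n n ℂ) (X : Matrix n n ℂ),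
        gec (fun Y => ∑ i, T i * Λ Y * (T i)ᴴ) X = ∑ m, Km m * gec Λ X * (Km m)ᴴ := by
  obtain ⟨r, R, hR⟩ := exists_rows_sum_conjTranspose_mul_eq hT
  let e := (Fintype.equivFin (ι ⊕ Fin r ⊕ Unit)).symm
  refine ⟨_, erasureKraus T R ∘ e, ?_, fun Λ X => ?_⟩
  · calc ∑ m, (erasureKraus T R (e m))ᴴ * erasureKraus T R (e m)
        = ∑ x, (erasureKraus T R x)ᴴ * erasureKraus T R x :=
          e.sum_comp fun x => (erasureKraus T R x)ᴴ * erasureKraus T R x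
      _ = 1 := by rw [sum_conjTranspose_mul_erasureKraus, hR, add_sub_cancel, fromBlocks_one]
  · rw [gec_comp_eq_sum_erasureKraus hR]
    exact (e.sum_comp fun x => erasureKraus T R x * gec Λ X * (erasureKraus T R x)ᴴ).symm

end Degradation

/-- if Λ₁ = Θ ∘ Λ₂ for quantum operations Θ, Λ₂, then the generalized erasure
channel Γ_{Λ₁} is a quantum channel composed with Γ_{Λ₂}. -/
theorem gec_comp_degradation (d K J : ℕ)
    (A : Fin K → Matrix (Fin d) (Fin d) ℂ)
    (T : Fin J → Matrix (Fin d) (Fin d) ℂ)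
    (hA : (1 - ∑ k, (A k)ᴴ * A k).PosSemidef)
    (hT : (1 - ∑ j, (T j)ᴴ * T j).PosSemidef) :
    ∃ (M : ℕ) (Km : Fin M → Matrix (Fin d ⊕ Fin 1) (Fin d ⊕ Fin 1) ℂ),
      ∑ m, (Km m)ᴴ * Km m = 1 ∧
      ∀ X : Matrix (Fin d) (Fin d) ℂ,
        gec (fun Y => ∑ j, T j * (∑ k, A k * Y * (A k)ᴴ) * (T j)ᴴ) X =
          ∑ m, Km m * gec (fun Y => ∑ k, A k * Y * (A k)ᴴ) X * (Km m)ᴴ := by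
  obtain ⟨M, Km, hKm, hgec⟩ := gec_comp_degradation_general T hT
  exact ⟨M, Km, hKm, hgec fun Y => ∑ k, A k * Y * (A k)ᴴ⟩
end

section
/- Let 0 ≤ a < b ≤ 1. Then the supremum over π ∈ [0,1] of h(π·b + (1−π)·a) − π·h(b) − (1−π)·h(a) equals log(1 + exp(−(h(b) − h(a))/(b − a))) − (b·h(a) − a·h(b))/(b − a). -/
/-- The binary entropy h(x) = −x log x − (1−x) log(1−x) (natural logarithm). -/
noncomputable def binEnt (x : ℝ) : ℝ := -x * Real.log x - (1 - x) * Real.log (1 - x)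

/-!
The quantity to be maximised is the height of the graph of the concave function `h` above its chord
over `[a, b]`. By the mean value theorem some `c ∈ (a, b)` has `h'(c) = s`, the slope of the chord;
the tangent at `c` lies above the graph and is parallel to the chord, so the height is maximal at
`c`. The maximum is the difference of the intercepts of the two lines at `0`. For the chord this is
`(b h(a) - a h(b)) / (b - a)`, and for the tangent `h(c) - s c = -log (1 - c) = log (1 + exp (-s))`,
because `exp (-s) = c / (1 - c)`.
-/

open Set

section JensenGap

variable {f : ℝ → ℝ} {a b c : ℝ}

/-- The Jensen gap of `f` at the two-point distribution with mass `π` at `b` and `1 - π` at `a`: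
the height of the graph of `f` above the chord from `(a, f a)` to `(b, f b)`, at the mean. For the
binary entropy it is the Holevo quantity of the two-point ensemble. -/
def jensenGap (f : ℝ → ℝ) (a b π : ℝ) : ℝ :=
  f (π * b + (1 - π) * a) - π * f b - (1 - π) * f a

lemma le_tangent_of_concaveOn {S : Set ℝ} {f' x y : ℝ} (hf : ConcaveOn ℝ S f)
    (hx : x ∈ S) (hy : y ∈ S) (hf' : HasDerivAt f f' x) : f y ≤ f x + f' * (y - x) := by
  rcases lt_trichotomy x y with hxy | rfl | hyx
  · have h := hf.slope_le_of_hasDerivAt hx hy hxy hf'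
    rw [slope_def_field, div_le_iff₀ (sub_pos.2 hxy)] at h
    linarith
  · simp
  · have h := hf.le_slope_of_hasDerivAt hy hx hyx hf'
    rw [slope_def_field, le_div_iff₀ (sub_pos.2 hyx)] at h
    linarith

lemma jensenGap_eq_sub_chord (f : ℝ → ℝ) (hab : a ≠ b) (π : ℝ) :
    jensenGap f a b π = f (π * b + (1 - π) * a)
      - (f b - f a) / (b - a) * (π * b + (1 - π) * a) - (b * f a - a * f b) / (b - a) := by
  have hba : b - a ≠ 0 := sub_ne_zero.2 hab.symm
  unfold jensenGap
  field_simp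
  ring

lemma isGreatest_jensenGap (hf : ConcaveOn ℝ (Icc a b) f) (hab : a < b) (hc : c ∈ Icc a b)
    (hf' : HasDerivAt f ((f b - f a) / (b - a)) c) :
    IsGreatest {y | ∃ π ∈ Icc (0 : ℝ) 1, y = jensenGap f a b π}
      (f c - (f b - f a) / (b - a) * c - (b * f a - a * f b) / (b - a)) := by
  have hba : 0 < b - a := sub_pos.2 hab
  constructor
  · have hmean : (c - a) / (b - a) * b + (1 - (c - a) / (b - a)) * a = c := by
      field_simp
      ring
    refine ⟨(c - a) / (b - a), ⟨div_nonneg (sub_nonneg.2 hc.1) hba.le, ?_⟩, ?_⟩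
    · exact div_le_one_of_le₀ (sub_le_sub_right hc.2 a) hba.le
    · rw [jensenGap_eq_sub_chord f hab.ne, hmean]
  · rintro _ ⟨π, hπ, rfl⟩
    have hmem : π * b + (1 - π) * a ∈ Icc a b :=
      (convex_Icc a b) (right_mem_Icc.2 hab.le) (left_mem_Icc.2 hab.le) hπ.1
        (sub_nonneg.2 hπ.2) (add_sub_cancel π 1)
    have htangent := le_tangent_of_concaveOn hf hc hmem hf'
    rw [jensenGap_eq_sub_chord f hab.ne]
    linarith

end JensenGap

lemma binEnt_eq_binEntropy : binEnt = Real.binEntropy := by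
  ext x
  simp only [binEnt, Real.binEntropy, Real.log_inv]
  ring

lemma exists_log_sub_log_eq_slope_binEntropy {a b : ℝ} (ha : 0 ≤ a) (hab : a < b) (hb : b ≤ 1) :
    ∃ c ∈ Ioo a b,
      Real.log (1 - c) - Real.log c = (Real.binEntropy b - Real.binEntropy a) / (b - a) :=
  exists_hasDerivAt_eq_slope _ _ hab Real.binEntropy_continuous.continuousOn fun _ hx ↦
    Real.hasDerivAt_binEntropy (ha.trans_lt hx.1).ne' (hx.2.trans_le hb).ne

lemma binEntropy_tangent_intercept_eq {c : ℝ} (hc₀ : 0 < c) (hc₁ : c < 1) :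
    Real.binEntropy c - (Real.log (1 - c) - Real.log c) * c
      = Real.log (1 + Real.exp (-(Real.log (1 - c) - Real.log c))) := by
  have h1c : 0 < 1 - c := sub_pos.2 hc₁
  have hodds : 1 + Real.exp (-(Real.log (1 - c) - Real.log c)) = (1 - c)⁻¹ := by
    rw [neg_sub, Real.exp_sub, Real.exp_log hc₀, Real.exp_log h1c]
    field_simp
    ring
  rw [hodds, Real.binEntropy, Real.log_inv, Real.log_inv]
  ring

/-- for 0 ≤ a < b ≤ 1, the supremum over π ∈ [0,1] of
h(πb + (1−π)a) − πh(b) − (1−π)h(a) equals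
log(1 + exp(−(h(b)−h(a))/(b−a))) − (b·h(a) − a·h(b))/(b−a). -/
theorem binary_holevo_sup (a b : ℝ) (ha : 0 ≤ a) (hab : a < b) (hb : b ≤ 1) :
    sSup {y : ℝ | ∃ π ∈ Set.Icc (0:ℝ) 1,
        y = binEnt (π * b + (1 - π) * a) - π * binEnt b - (1 - π) * binEnt a}
      = Real.log (1 + Real.exp (-((binEnt b - binEnt a) / (b - a))))
        - (b * binEnt a - a * binEnt b) / (b - a) := by
  rw [binEnt_eq_binEntropy]
  obtain ⟨c, hc, hslope⟩ := exists_log_sub_log_eq_slope_binEntropy ha hab hb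
  have hc₀ : 0 < c := ha.trans_lt hc.1
  have hc₁ : c < 1 := hc.2.trans_le hb
  have hconcave : ConcaveOn ℝ (Icc a b) Real.binEntropy :=
    Real.strictConcave_binEntropy.concaveOn.subset (Icc_subset_Icc ha hb) (convex_Icc a b)
  have hderiv := Real.hasDerivAt_binEntropy hc₀.ne' hc₁.ne
  rw [hslope] at hderiv
  have hintercept := binEntropy_tangent_intercept_eq hc₀ hc₁
  rw [hslope] at hintercept
  rw [← hintercept]
  exact (isGreatest_jensenGap hconcave hab (Ioo_subset_Icc_self hc) hderiv).csSup_eq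
end

section
/- Let 0 ≤ a ≤ b ≤ 1. Then the supremum over π ∈ [0,1] of h(π·b + (1−π)·a) − π·h(b) − (1−π)·h(a) is at least log 2 − h((1 + (b − a))/2). -/
open Real (binEntropy negMulLog)

theorem binEnt_eq_binEntropy_s6 (x : ℝ) : binEnt x = binEntropy x := by
  rw [binEnt, Real.binEntropy_eq_negMulLog_add_negMulLog_one_sub, negMulLog, negMulLog]
  ring

/-- The binary entropy of the unnormalized weights `x` and `y`: their total mass times the entropy
of the distribution proportional to them, written so that no division occurs. -/
noncomputable def splitEntropy (x y : ℝ) : ℝ :=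
  negMulLog x + negMulLog y - negMulLog (x + y)

theorem splitEntropy_comm (x y : ℝ) : splitEntropy x y = splitEntropy y x := by
  rw [splitEntropy, splitEntropy, add_comm (negMulLog x), add_comm x]

theorem splitEntropy_one_sub (p : ℝ) : splitEntropy p (1 - p) = binEntropy p := by
  rw [splitEntropy, add_sub_cancel, Real.negMulLog_one, sub_zero,
    Real.binEntropy_eq_negMulLog_add_negMulLog_one_sub]

theorem splitEntropy_mul_mul (c x y : ℝ) :
    splitEntropy (c * x) (c * y) = c * splitEntropy x y := by
  simp only [splitEntropy, ← mul_add, Real.negMulLog_mul]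
  ring

theorem splitEntropy_eq_mul_binEntropy {x y : ℝ} (hxy : x + y ≠ 0) :
    splitEntropy x y = (x + y) * binEntropy (x / (x + y)) := by
  have hy : (x + y) * (1 - x / (x + y)) = y := by field_simp; ring
  rw [← splitEntropy_one_sub, ← splitEntropy_mul_mul, mul_div_cancel₀ x hxy, hy]

theorem splitEntropy_add_le {x y z w : ℝ} (hx : 0 ≤ x) (hy : 0 ≤ y) (hz : 0 ≤ z) (hw : 0 ≤ w) :
    splitEntropy x y + splitEntropy z w ≤ splitEntropy (x + z) (y + w) := by
  rcases (add_nonneg hx hy).eq_or_lt' with hxy | hxy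
  · obtain ⟨rfl, rfl⟩ := (add_eq_zero_iff_of_nonneg hx hy).1 hxy
    simp [splitEntropy]
  rcases (add_nonneg hz hw).eq_or_lt' with hzw | hzw
  · obtain ⟨rfl, rfl⟩ := (add_eq_zero_iff_of_nonneg hz hw).1 hzw
    simp [splitEntropy]
  have htotal : x + z + (y + w) = (x + y) + (z + w) := by ring
  have hpos : 0 < (x + y) + (z + w) := add_pos hxy hzw
  have hconcave := Real.strictConcave_binEntropy.concaveOn.2
    (x := x / (x + y)) (y := z / (z + w))
    ⟨by positivity, div_le_one_of_le₀ (by linarith) hxy.le⟩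
    ⟨by positivity, div_le_one_of_le₀ (by linarith) hzw.le⟩
    (div_nonneg hxy.le hpos.le) (div_nonneg hzw.le hpos.le)
    (by rw [← add_div, div_self hpos.ne'])
  have hmean : (x + y) / ((x + y) + (z + w)) * (x / (x + y)) +
      (z + w) / ((x + y) + (z + w)) * (z / (z + w)) = (x + z) / ((x + y) + (z + w)) := by
    field_simp
  rw [smul_eq_mul, smul_eq_mul, smul_eq_mul, smul_eq_mul, hmean] at hconcave
  rw [splitEntropy_eq_mul_binEntropy hxy.ne', splitEntropy_eq_mul_binEntropy hzw.ne',
    splitEntropy_eq_mul_binEntropy (htotal ▸ hpos.ne'), htotal, ← div_le_iff₀' hpos]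
  convert hconcave using 1
  ring

/-- The mutual information `H(Y) - H(Y | X)` of a bit `X` with `P(X = 1) = p` and a bit `Y` with
`P(Y = 1 | X = 1) = b` and `P(Y = 1 | X = 0) = a`; it is the objective of the supremum. -/
noncomputable def binMutualInfo (p a b : ℝ) : ℝ :=
  binEntropy (p * b + (1 - p) * a) - p * binEntropy b - (1 - p) * binEntropy a

/-- Symmetry of mutual information: the right-hand side is `H(X) - H(X | Y)`, with one
`splitEntropy` term for each value of `Y`. -/
theorem binMutualInfo_eq_binEntropy_sub (p a b : ℝ) :
    binMutualInfo p a b = binEntropy p -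
      (splitEntropy (p * b) ((1 - p) * a) +
        splitEntropy (p * (1 - b)) ((1 - p) * (1 - a))) := by
  have hcompl : 1 - (p * b + (1 - p) * a) = p * (1 - b) + (1 - p) * (1 - a) := by ring
  rw [binMutualInfo, ← splitEntropy_one_sub a, ← splitEntropy_one_sub b,
    ← splitEntropy_mul_mul, ← splitEntropy_mul_mul,
    Real.binEntropy_eq_negMulLog_add_negMulLog_one_sub (_ + _), hcompl,
    Real.binEntropy_eq_negMulLog_add_negMulLog_one_sub p]
  simp only [splitEntropy, ← mul_add, add_sub_cancel, mul_one]
  ring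

theorem binEntropy_sub_le_binMutualInfo {p a b : ℝ} (hp : p ∈ Set.Icc (0 : ℝ) 1)
    (ha : a ∈ Set.Icc (0 : ℝ) 1) (hb : b ∈ Set.Icc (0 : ℝ) 1) :
    binEntropy p - binEntropy (p * b + (1 - p) * (1 - a)) ≤ binMutualInfo p a b := by
  obtain ⟨hp₀, hp₁⟩ := hp
  obtain ⟨ha₀, ha₁⟩ := ha
  obtain ⟨hb₀, hb₁⟩ := hb
  have hcompl : (1 - p) * a + p * (1 - b) = 1 - (p * b + (1 - p) * (1 - a)) := by ring
  have hfano := splitEntropy_add_le (mul_nonneg hp₀ hb₀) (mul_nonneg (sub_nonneg.2 hp₁) ha₀)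
    (mul_nonneg (sub_nonneg.2 hp₁) (sub_nonneg.2 ha₁)) (mul_nonneg hp₀ (sub_nonneg.2 hb₁))
  rw [hcompl, splitEntropy_one_sub, splitEntropy_comm ((1 - p) * (1 - a))] at hfano
  rw [binMutualInfo_eq_binEntropy_sub]
  exact sub_le_sub_left hfano _

theorem binMutualInfo_le_log_two {p a b : ℝ} (hp : p ∈ Set.Icc (0 : ℝ) 1)
    (ha : a ∈ Set.Icc (0 : ℝ) 1) (hb : b ∈ Set.Icc (0 : ℝ) 1) :
    binMutualInfo p a b ≤ Real.log 2 := by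
  have hHb := mul_nonneg hp.1 (Real.binEntropy_nonneg hb.1 hb.2)
  have hHa := mul_nonneg (sub_nonneg.2 hp.2) (Real.binEntropy_nonneg ha.1 ha.2)
  have hHY : binEntropy (p * b + (1 - p) * a) ≤ Real.log 2 := Real.binEntropy_le_log_two
  rw [binMutualInfo]
  linarith

theorem binary_holevo_sup_lower_bound_general {p a b : ℝ} (hp : p ∈ Set.Icc (0 : ℝ) 1)
    (ha : a ∈ Set.Icc (0 : ℝ) 1) (hb : b ∈ Set.Icc (0 : ℝ) 1) :
    binEnt p - binEnt (p * b + (1 - p) * (1 - a)) ≤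
      sSup {y : ℝ | ∃ π ∈ Set.Icc (0 : ℝ) 1,
        y = binEnt (π * b + (1 - π) * a) - π * binEnt b - (1 - π) * binEnt a} := by
  simp only [binEnt_eq_binEntropy_s6]
  refine (binEntropy_sub_le_binMutualInfo hp ha hb).trans (le_csSup ⟨Real.log 2, ?_⟩ ⟨p, hp, rfl⟩)
  rintro _ ⟨q, hq, rfl⟩
  exact binMutualInfo_le_log_two hq ha hb

/-- for 0 ≤ a ≤ b ≤ 1, the supremum over π ∈ [0,1] of
h(πb + (1−π)a) − πh(b) − (1−π)h(a) is at least log 2 − h((1 + (b − a))/2). -/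
theorem binary_holevo_sup_lower_bound (a b : ℝ) (ha : 0 ≤ a) (hab : a ≤ b) (hb : b ≤ 1) :
    Real.log 2 - binEnt ((1 + (b - a)) / 2) ≤
      sSup {y : ℝ | ∃ π ∈ Set.Icc (0:ℝ) 1,
        y = binEnt (π * b + (1 - π) * a) - π * binEnt b - (1 - π) * binEnt a} := by
  convert binary_holevo_sup_lower_bound_general (p := 2⁻¹) (by norm_num)
    ⟨ha, hab.trans hb⟩ ⟨ha.trans hab, hb⟩ using 2
  · rw [binEnt_eq_binEntropy_s6, Real.binEntropy_two_inv]
  · ring_nf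
end

section
/- Let Λ be a quantum operation on d×d complex matrices and Γ_Λ its generalized erasure channel. Let {(π_k, ξ_k)}_{k=1}^N be a finite ensemble of d×d density matrices with all π_k > 0, and suppose p_k := tr(Λ(ξ_k)) > 0 for every k. Set p̄ = Σ_k π_k p_k, q_k = π_k p_k / p̄, and ρ_k = Λ(ξ_k)/p_k. Then S(Γ_Λ(Σ_k π_k ξ_k)) − Σ_k π_k S(Γ_Λ(ξ_k)) = p̄·[ S(Σ_k q_k ρ_k) − Σ_k q_k S(ρ_k) ] + h(p̄) − Σ_k π_k h(p_k). -/
open Matrix ComplexOrder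

/-- The von Neumann entropy S(ρ) = Σ_i −λ_i log λ_i over the eigenvalues of a Hermitian
matrix (and 0 on non-Hermitian matrices). Natural logarithm, 0 log 0 = 0. -/
noncomputable def vnEnt {n : Type*} [Fintype n] [DecidableEq n] (ρ : Matrix n n ℂ) : ℝ :=
  if h : ρ.IsHermitian then ∑ i, -(h.eigenvalues i * Real.log (h.eigenvalues i)) else 0

/-!
For Hermitian matrices the entropy is the sum of `η x = -x log x` over the roots of the
characteristic polynomial. Hence it is additive on block-diagonal matrices, and
`η (x * y) = y * η x + x * η y` turns into the scaling law `S(c M) = c S(M) + η(c) tr M`.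
Applied to the two blocks of `Γ_Λ(X)` with `tr X = 1` and `p = tr Λ(X)`, these give
`S(Γ_Λ(X)) = p S(Λ(X) / p) + h(p)`. This holds for every signal state and for their average, whose
normalized output is the `q`-mixture of the `ρ_k`; subtracting the averages gives the decomposition.
-/

open Real (negMulLog)

section Hermitian

variable {n : Type*}

theorem isHermitian_diagonal_ofReal [DecidableEq n] (v : n → ℝ) :
    (diagonal fun i ↦ (v i : ℂ)).IsHermitian :=
  isHermitian_diagonal_iff.2 fun i ↦ Complex.conj_ofReal (v i)

variable [Fintype n]

theorem ofReal_re_trace_of_isHermitian {M : Matrix n n ℂ} (hM : M.IsHermitian) :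
    (M.trace.re : ℂ) = M.trace := by
  rw [← Complex.conj_eq_iff_re, starRingEnd_apply, ← trace_conjTranspose, hM.eq]

open scoped MatrixOrder Matrix.Norms.L2Operator in
theorem trace_mul_nonneg_of_posSemidef {𝕜 : Type*} [RCLike 𝕜] {A B : Matrix n n 𝕜}
    (hA : A.PosSemidef) (hB : B.PosSemidef) : 0 ≤ (A * B).trace := by
  classical
  obtain ⟨C, rfl⟩ := CStarAlgebra.nonneg_iff_eq_star_mul_self.mp hB.nonneg
  have hcycle : (A * (star C * C)).trace = (C * A * Cᴴ).trace := by
    rw [← mul_assoc, trace_mul_comm, ← mul_assoc, star_eq_conjTranspose]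
  rw [hcycle]
  exact (hA.mul_mul_conjTranspose_same C).trace_nonneg

end Hermitian

section Entropy

variable {m n : Type*} [Fintype m] [DecidableEq m] [Fintype n] [DecidableEq n]

theorem binEnt_eq_negMulLog_add_negMulLog_one_sub (x : ℝ) :
    binEnt x = negMulLog x + negMulLog (1 - x) := by
  rw [binEnt, negMulLog, negMulLog]
  ring

theorem vnEnt_eq_sum_roots_charpoly {M : Matrix n n ℂ} (hM : M.IsHermitian) :
    vnEnt M = (M.charpoly.roots.map fun z ↦ negMulLog z.re).sum := by
  rw [vnEnt, dif_pos hM, hM.roots_charpoly_eq_eigenvalues, Multiset.map_map]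
  simp [Real.negMulLog_eq_neg]

theorem vnEnt_eq_sum_of_charpoly_eq_prod {ι : Type*} [Fintype ι] {M : Matrix n n ℂ}
    (hM : M.IsHermitian) {v : ι → ℝ}
    (hv : M.charpoly = ∏ i, (Polynomial.X - Polynomial.C (v i : ℂ))) :
    vnEnt M = ∑ i, negMulLog (v i) := by
  rw [vnEnt_eq_sum_roots_charpoly hM, hv,
    Polynomial.roots_prod _ _ (Finset.prod_ne_zero_iff.2 fun i _ ↦ Polynomial.X_sub_C_ne_zero _)]
  simp

theorem vnEnt_eq_sum_negMulLog_eigenvalues {M : Matrix n n ℂ} (hM : M.IsHermitian) :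
    vnEnt M = ∑ i, negMulLog (hM.eigenvalues i) :=
  vnEnt_eq_sum_of_charpoly_eq_prod hM hM.charpoly_eq

theorem vnEnt_diagonal_ofReal (v : n → ℝ) :
    vnEnt (diagonal fun i ↦ (v i : ℂ)) = ∑ i, negMulLog (v i) :=
  vnEnt_eq_sum_of_charpoly_eq_prod (isHermitian_diagonal_ofReal v) (charpoly_diagonal _)

theorem vnEnt_fromBlocks_zero_zero {A : Matrix m m ℂ} {D : Matrix n n ℂ}
    (hA : A.IsHermitian) (hD : D.IsHermitian) :
    vnEnt (fromBlocks A 0 0 D) = vnEnt A + vnEnt D := by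
  have hAD : (fromBlocks A 0 0 D).IsHermitian := hA.fromBlocks conjTranspose_zero hD
  rw [vnEnt_eq_sum_roots_charpoly hAD, vnEnt_eq_sum_roots_charpoly hA,
    vnEnt_eq_sum_roots_charpoly hD, charpoly_fromBlocks_zero₁₂,
    Polynomial.roots_mul (mul_ne_zero A.charpoly_monic.ne_zero D.charpoly_monic.ne_zero),
    Multiset.map_add, Multiset.sum_add]

theorem vnEnt_ofReal_smul {M : Matrix n n ℂ} (hM : M.IsHermitian) (c : ℝ) :
    vnEnt ((c : ℂ) • M) = c * vnEnt M + negMulLog c * M.trace.re := by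
  have hcM : (c : ℂ) • M = cfc (c * ·) M := by
    rw [cfc_const_mul_id c M hM.isSelfAdjoint]
    rfl
  have hcharpoly : ((c : ℂ) • M).charpoly =
      ∏ i, (Polynomial.X - Polynomial.C ((c * hM.eigenvalues i : ℝ) : ℂ)) := by
    rw [hcM, hM.charpoly_cfc_eq]
    rfl
  have hherm : ((c : ℂ) • M).IsHermitian := by
    rw [hcM]
    exact cfc_predicate (c * ·) M
  have htrace : M.trace.re = ∑ i, hM.eigenvalues i := by
    simp [hM.trace_eq_sum_eigenvalues]
  simp only [vnEnt_eq_sum_of_charpoly_eq_prod hherm hcharpoly,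
    vnEnt_eq_sum_negMulLog_eigenvalues hM, htrace, Real.negMulLog_mul, Finset.sum_add_distrib,
    Finset.mul_sum, mul_comm, add_comm]

theorem vnEnt_eq_mul_vnEnt_inv_smul_add {M : Matrix n n ℂ} (hM : M.IsHermitian) {t : ℝ}
    (ht : t = M.trace.re) (ht0 : t ≠ 0) :
    vnEnt M = t * vnEnt ((t : ℂ)⁻¹ • M) + negMulLog t := by
  have hnorm : vnEnt ((t : ℂ)⁻¹ • M) = t⁻¹ * vnEnt M + negMulLog t⁻¹ * t := by
    rw [← Complex.ofReal_inv, vnEnt_ofReal_smul hM, ht]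
  have hlog : t * (negMulLog t⁻¹ * t) = -negMulLog t := by
    rw [negMulLog, negMulLog, Real.log_inv]
    field_simp
  rw [hnorm, mul_add, mul_inv_cancel_left₀ ht0, hlog]
  ring

theorem vnEnt_gec_eq_vnEnt_add_negMulLog {Λ : Matrix n n ℂ → Matrix n n ℂ} {X : Matrix n n ℂ}
    (hX : X.IsHermitian) (hΛX : (Λ X).IsHermitian) :
    vnEnt (gec Λ X) = vnEnt (Λ X) + negMulLog (X.trace.re - (Λ X).trace.re) := by
  have herasure : (of fun _ _ ↦ X.trace - (Λ X).trace : Matrix (Fin 1) (Fin 1) ℂ) =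
      diagonal fun _ ↦ ((X.trace.re - (Λ X).trace.re : ℝ) : ℂ) := by
    ext i j
    simp [ofReal_re_trace_of_isHermitian hX, ofReal_re_trace_of_isHermitian hΛX,
      Subsingleton.elim i j]
  rw [gec, herasure, vnEnt_fromBlocks_zero_zero hΛX (isHermitian_diagonal_ofReal _),
    vnEnt_diagonal_ofReal, Fin.sum_univ_one]

end Entropy

section Ensemble

variable {ι : Type*} [Fintype ι]

theorem sum_mul_pos_of_sum_eq_one {w x : ι → ℝ} (hw : ∀ i, 0 ≤ w i) (hw1 : ∑ i, w i = 1)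
    (hx : ∀ i, 0 < x i) : 0 < ∑ i, w i * x i := by
  obtain ⟨i, -, hi⟩ := Finset.exists_ne_zero_of_sum_ne_zero (hw1.trans_ne one_ne_zero)
  exact Finset.sum_pos' (fun j _ ↦ mul_nonneg (hw j) (hx j).le)
    ⟨i, Finset.mem_univ i, mul_pos ((hw i).lt_of_ne' hi) (hx i)⟩

theorem sum_mul_div_smul_inv_smul {𝕜 V : Type*} [Field 𝕜] [AddCommGroup V] [Module 𝕜 V]
    (w : ι → 𝕜) {x : ι → 𝕜} (hx : ∀ i, x i ≠ 0) (c : 𝕜) (v : ι → V) :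
    ∑ i, (w i * x i / c) • (x i)⁻¹ • v i = c⁻¹ • ∑ i, w i • v i := by
  rw [Finset.smul_sum]
  refine Finset.sum_congr rfl fun i _ ↦ ?_
  rw [smul_smul, smul_smul, div_mul_eq_mul_div, mul_inv_cancel_right₀ (hx i), div_eq_inv_mul]

variable {n : Type*} [Fintype n]

/-- A density matrix: the state of a quantum system with orthonormal basis indexed by `n`. -/
def IsDensityMatrix (σ : Matrix n n ℂ) : Prop :=
  σ.PosSemidef ∧ σ.trace = 1

theorem isDensityMatrix_sum_smul {w : ι → ℝ} {σ : ι → Matrix n n ℂ} (hw : ∀ i, 0 ≤ w i)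
    (hw1 : ∑ i, w i = 1) (hσ : ∀ i, IsDensityMatrix (σ i)) :
    IsDensityMatrix (∑ i, (w i : ℂ) • σ i) := by
  constructor
  · exact posSemidef_sum _ fun i _ ↦ (hσ i).1.smul (Complex.zero_le_real.2 (hw i))
  · simp only [trace_sum, trace_smul, (hσ _).2, smul_eq_mul, mul_one]
    exact_mod_cast hw1

end Ensemble

section QuantumOperation

variable {m n κ : Type*} [Fintype n] [Fintype κ]

/-- The linear map `X ↦ ∑ k, A k * X * (A k)ᴴ` with Kraus operators `A`: a quantum operation when
`∑ k, (A k)ᴴ * A k ≤ 1`, bundled to make linearity available. -/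
def krausMap (A : κ → Matrix m n ℂ) : Matrix n n ℂ →ₗ[ℂ] Matrix m m ℂ where
  toFun X := ∑ k, A k * X * (A k)ᴴ
  map_add' X Y := by
    simp only [Matrix.mul_add, Matrix.add_mul, Finset.sum_add_distrib]
  map_smul' c X := by
    simp only [Matrix.mul_smul, Matrix.smul_mul, Finset.smul_sum, RingHom.id_apply]

variable [Fintype m]

/-- A positive, trace-nonincreasing linear map on matrices; the quantum operations are the
completely positive ones. -/
structure IsPositiveTraceNonincreasing (Λ : Matrix n n ℂ →ₗ[ℂ] Matrix m m ℂ) : Prop where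
  posSemidef : ∀ {X}, X.PosSemidef → (Λ X).PosSemidef
  trace_le : ∀ {X}, X.PosSemidef → (Λ X).trace ≤ X.trace

theorem trace_krausMap (A : κ → Matrix m n ℂ) (X : Matrix n n ℂ) :
    (krausMap A X).trace = ((∑ k, (A k)ᴴ * A k) * X).trace := by
  simp only [krausMap, LinearMap.coe_mk, AddHom.coe_mk, trace_sum, Matrix.sum_mul]
  exact Finset.sum_congr rfl fun k _ ↦ trace_mul_cycle (A k) X (A k)ᴴ

variable [DecidableEq n]

theorem isPositiveTraceNonincreasing_krausMap {A : κ → Matrix m n ℂ}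
    (hA : (1 - ∑ k, (A k)ᴴ * A k).PosSemidef) : IsPositiveTraceNonincreasing (krausMap A) where
  posSemidef hX := posSemidef_sum _ fun k _ ↦ hX.mul_mul_conjTranspose_same (A k)
  trace_le {X} hX := by
    have hdeficit := trace_mul_nonneg_of_posSemidef hA hX
    rwa [Matrix.sub_mul, Matrix.one_mul, trace_sub, sub_nonneg, ← trace_krausMap] at hdeficit

theorem vnEnt_gec_of_isDensityMatrix {Λ : Matrix n n ℂ → Matrix n n ℂ} {σ : Matrix n n ℂ}
    (hσ : IsDensityMatrix σ) (hΛσ : (Λ σ).IsHermitian) {p : ℝ} (hp : p = (Λ σ).trace.re)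
    (hp0 : p ≠ 0) : vnEnt (gec Λ σ) = p * vnEnt ((p : ℂ)⁻¹ • Λ σ) + binEnt p := by
  rw [vnEnt_gec_eq_vnEnt_add_negMulLog hσ.1.isHermitian hΛσ, hσ.2, Complex.one_re, ← hp,
    vnEnt_eq_mul_vnEnt_inv_smul_add hΛσ hp hp0, binEnt_eq_negMulLog_add_negMulLog_one_sub,
    add_assoc]

theorem gec_holevo_quantity_decomposition_general {ι : Type*} [Fintype ι]
    {Λ : Matrix n n ℂ →ₗ[ℂ] Matrix n n ℂ} (hΛ : IsPositiveTraceNonincreasing Λ)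
    {π : ι → ℝ} {ξ : ι → Matrix n n ℂ} (hπ : ∀ i, 0 ≤ π i) (hπ1 : ∑ i, π i = 1)
    (hξ : ∀ i, IsDensityMatrix (ξ i))
    {p : ι → ℝ} (hp : ∀ i, p i = (Λ (ξ i)).trace.re) (hppos : ∀ i, 0 < p i)
    {pbar : ℝ} (hpbar : pbar = ∑ i, π i * p i)
    {q : ι → ℝ} (hq : ∀ i, q i = π i * p i / pbar)
    {ρ : ι → Matrix n n ℂ} (hρ : ∀ i, ρ i = (p i : ℂ)⁻¹ • Λ (ξ i)) :
    vnEnt (gec Λ (∑ i, (π i : ℂ) • ξ i)) - ∑ i, π i * vnEnt (gec Λ (ξ i))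
      = pbar * (vnEnt (∑ i, (q i : ℂ) • ρ i) - ∑ i, q i * vnEnt (ρ i))
        + binEnt pbar - ∑ i, π i * binEnt (p i) := by
  have hpbar0 : pbar ≠ 0 := hpbar ▸ (sum_mul_pos_of_sum_eq_one hπ hπ1 hppos).ne'
  have hmean : IsDensityMatrix (∑ i, (π i : ℂ) • ξ i) := isDensityMatrix_sum_smul hπ hπ1 hξ
  have hpbar_trace : pbar = (Λ (∑ i, (π i : ℂ) • ξ i)).trace.re := by
    simp [hpbar, hp, map_sum, trace_sum]
  have hmixture : ∑ i, (q i : ℂ) • ρ i = (pbar : ℂ)⁻¹ • Λ (∑ i, (π i : ℂ) • ξ i) := by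
    have hp0 : ∀ i, (p i : ℂ) ≠ 0 := fun i ↦ Complex.ofReal_ne_zero.2 (hppos i).ne'
    simp only [hq, hρ, map_sum, map_smul, Complex.ofReal_div, Complex.ofReal_mul,
      sum_mul_div_smul_inv_smul _ hp0]
  have hsignal : ∀ i, vnEnt (gec Λ (ξ i)) = p i * vnEnt (ρ i) + binEnt (p i) := fun i ↦
    hρ i ▸ vnEnt_gec_of_isDensityMatrix (hξ i) (hΛ.posSemidef (hξ i).1).isHermitian (hp i)
      (hppos i).ne'
  have hweights : pbar * ∑ i, q i * vnEnt (ρ i) = ∑ i, π i * (p i * vnEnt (ρ i)) := by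
    simp only [Finset.mul_sum, hq, ← mul_assoc, mul_div_cancel₀ _ hpbar0]
  rw [vnEnt_gec_of_isDensityMatrix hmean (hΛ.posSemidef hmean.1).isHermitian hpbar_trace hpbar0,
    ← hmixture, mul_sub, hweights]
  simp only [hsignal, mul_add, Finset.sum_add_distrib]
  ring

end QuantumOperation

/-- the Holevo quantity of the ensemble {(π_k, ξ_k)} at the output of the
generalized erasure channel Γ_Λ equals
p̄·[S(Σ q_k ρ_k) − Σ q_k S(ρ_k)] + h(p̄) − Σ π_k h(p_k). -/
theorem gec_holevo_quantity_decomposition (d K N : ℕ)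
    (A : Fin K → Matrix (Fin d) (Fin d) ℂ)
    (hA : (1 - ∑ k, (A k)ᴴ * A k).PosSemidef)
    (π : Fin N → ℝ) (ξ : Fin N → Matrix (Fin d) (Fin d) ℂ)
    (hπ : ∀ i, 0 < π i) (hπ1 : ∑ i, π i = 1)
    (hξ : ∀ i, (ξ i).PosSemidef ∧ (ξ i).trace = 1)
    (p : Fin N → ℝ)
    (hp : ∀ i, p i = ((∑ k, A k * ξ i * (A k)ᴴ).trace).re)
    (hppos : ∀ i, 0 < p i)
    (pbar : ℝ) (hpbar : pbar = ∑ i, π i * p i)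
    (q : Fin N → ℝ) (hq : ∀ i, q i = π i * p i / pbar)
    (ρ : Fin N → Matrix (Fin d) (Fin d) ℂ)
    (hρ : ∀ i, ρ i = ((p i : ℂ))⁻¹ • ∑ k, A k * ξ i * (A k)ᴴ) :
    vnEnt (gec (fun X => ∑ k, A k * X * (A k)ᴴ) (∑ i, (π i : ℂ) • ξ i))
        - ∑ i, π i * vnEnt (gec (fun X => ∑ k, A k * X * (A k)ᴴ) (ξ i))
      = pbar * (vnEnt (∑ i, (q i : ℂ) • ρ i) - ∑ i, q i * vnEnt (ρ i))
        + binEnt pbar - ∑ i, π i * binEnt (p i) :=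
  gec_holevo_quantity_decomposition_general (isPositiveTraceNonincreasing_krausMap hA)
    (fun i ↦ (hπ i).le) hπ1 hξ hp hppos hpbar hq hρ
end
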